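/- arXiv:2604.02005 — 2 statements merged into one kernel-verified Lean document; each statement's English description precedes it below -/
import Mathlib

section
/- Let α be irrational with continued fraction convergent denominators (q_k). Let N ∈ ℕ and ε > 0 satisfy 1/N < 2ε < ‖q_2 α‖, where ‖x‖ denotes the distance of x to the nearest integer. Let K be such that q_K ≤ N < q_{K+1}, and set M := max(εN, min(ε q_{K+1}, N/(2 q_K))). Then ⌊M⌋ ≤ #{n ≤ N : ‖nα‖ < ε} ≤ 32 M. -/
/-- Distance from a real number to the nearest integer. -/
noncomputable def nid (x : ℝ) : ℝ := |x - round x|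

open Classical in
/-- The counting set as a finset. -/
noncomputable def cset (α : ℝ) (N : ℕ) (ε : ℝ) : Finset ℕ :=
  (Finset.Icc 1 N).filter (fun n => nid (n * α) < ε)

lemma mem_cset (α : ℝ) (N : ℕ) (ε : ℝ) (n : ℕ) :
    n ∈ cset α N ε ↔ (1 ≤ n ∧ n ≤ N) ∧ nid (n * α) < ε := by
  simp [cset]

lemma ncard_cset (α : ℝ) (N : ℕ) (ε : ℝ) :
    {n : ℕ | 1 ≤ n ∧ n ≤ N ∧ nid (n * α) < ε}.ncard = (cset α N ε).card := by
  rw [← Set.ncard_coe_finset]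
  congr 1
  ext n
  simp [mem_cset, and_assoc]

lemma nid_le (x : ℝ) (z : ℤ) : nid x ≤ |x - z| := round_le x z

lemma pigeon (α : ℝ) (N T m p : ℕ) (ε : ℝ) (hm : 0 < m) (hpm : p ≤ m)
    (hT : T * m < (N + 1) * p) (hε : (p : ℝ) / m ≤ ε) : T ≤ (cset α N ε).card := by
  classical
  have hmR : (0 : ℝ) < m := by exact_mod_cast hm
  let f : ℕ → ℤ := fun n => ⌊(m : ℝ) * (n * α)⌋
  let g : ℕ × ℕ → ℕ := fun x => ((f x.1 + x.2) % (m : ℤ)).toNat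
  have hmZ : (0 : ℤ) < m := by exact_mod_cast hm
  have hg : ∀ x, ((g x : ℕ) : ℤ) = (f x.1 + x.2) % (m : ℤ) := fun x =>
    Int.toNat_of_nonneg (Int.emod_nonneg _ hmZ.ne')
  obtain ⟨i, hi, hc⟩ := Finset.exists_lt_card_fiber_of_mul_lt_card_of_maps_to
    (s := (Finset.range (N + 1)) ×ˢ (Finset.range p)) (t := Finset.range m) (f := g) (n := T)
    (by
      intro x _
      have h1 := hg x
      have h2 := Int.emod_lt_of_pos (f x.1 + x.2) hmZ
      simp only [Finset.coe_range, Set.mem_Iio, Finset.mem_range]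
      omega)
    (by simp only [Finset.card_range, Finset.card_product]; rw [mul_comm]; exact hT)
  set B := ((Finset.range (N + 1)) ×ˢ (Finset.range p)).filter (fun x => g x = i) with hB
  have key : ∀ x ∈ B, ∀ y ∈ B, ∃ z : ℤ, f x.1 + x.2 = f y.1 + y.2 + m * z := by
    intro x hx y hy
    have h1 := (Finset.mem_filter.1 hx).2
    have h2 := (Finset.mem_filter.1 hy).2
    have h3 : (f x.1 + x.2) % (m : ℤ) = (f y.1 + y.2) % (m : ℤ) := by
      rw [← hg, ← hg, h1, h2]
    obtain ⟨z, hz⟩ := Int.ModEq.dvd (h3.symm : _ ≡ _ [ZMOD m])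
    exact ⟨z, by linarith⟩
  have hmem : ∀ x ∈ B, x.1 ≤ N ∧ x.2 < p := by
    intro x hx
    have h1 := Finset.mem_product.1 (Finset.mem_filter.1 hx).1
    have h2 := Finset.mem_range.1 h1.1
    exact ⟨by omega, Finset.mem_range.1 h1.2⟩
  have hinj : Set.InjOn Prod.fst (B : Set (ℕ × ℕ)) := by
    intro x hx y hy hxy
    obtain ⟨z, hz⟩ := key x hx y hy
    have h1 := (hmem x hx).2
    have h2 := (hmem y hy).2
    rw [hxy] at hz
    have hz0 : z = 0 := by
      by_contra hne
      have : (m : ℤ) ≤ |(m : ℤ) * z| := by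
        rw [abs_mul, abs_of_pos hmZ]
        have := Int.one_le_abs hne
        nlinarith
      have h4 : (m : ℤ) * z = x.2 - y.2 := by linarith
      rw [h4] at this
      have : |((x.2 : ℤ) - y.2)| < m := by
        rw [abs_lt]; constructor <;> omega
      omega
    have : x.2 = y.2 := by
      rw [hz0] at hz; omega
    exact Prod.ext hxy this
  have hclose : ∀ x ∈ B, ∀ y ∈ B, x.1 < y.1 → nid (((y.1 - x.1 : ℕ) : ℝ) * α) < ε := by
    intro x hx y hy hlt
    obtain ⟨z, hz⟩ := key y hy x hx
    have hzR : (f y.1 : ℝ) + y.2 = f x.1 + x.2 + m * z := by exact_mod_cast hz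
    have h1 := (hmem x hx).2
    have h2 := (hmem y hy).2
    have h1' : (x.2 : ℝ) + 1 ≤ p := by exact_mod_cast h1
    have h2' : (y.2 : ℝ) + 1 ≤ p := by exact_mod_cast h2
    have h3 : (0:ℝ) ≤ x.2 := Nat.cast_nonneg _
    have h4 : (0:ℝ) ≤ y.2 := Nat.cast_nonneg _
    have a1 := Int.floor_le ((m : ℝ) * (x.1 * α))
    have a2 := Int.lt_floor_add_one ((m : ℝ) * (x.1 * α))
    have b1 := Int.floor_le ((m : ℝ) * (y.1 * α))
    have b2 := Int.lt_floor_add_one ((m : ℝ) * (y.1 * α))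
    refine lt_of_le_of_lt (nid_le _ z) (lt_of_lt_of_le ?_ hε)
    rw [Nat.cast_sub hlt.le, lt_div_iff₀ hmR]
    have : |((y.1:ℝ) - x.1) * α - z| * m = |(m:ℝ) * (y.1 * α) - m * (x.1 * α) - m * z| := by
      rw [← abs_of_pos hmR, ← abs_mul, abs_of_pos hmR]; congr 1; ring
    rw [this, abs_lt]
    simp only [f] at hzR
    constructor <;> linarith
  set A := B.image Prod.fst with hA
  have hAc : A.card = B.card := Finset.card_image_of_injOn hinj
  have hAne : A.Nonempty := by
    rw [← Finset.card_pos]; omega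
  set n0 := A.min' hAne with hn0
  have hn0A : n0 ∈ A := Finset.min'_mem _ _
  have hcard : (A.erase n0).card ≤ (cset α N ε).card := by
    refine Finset.card_le_card_of_injOn (fun n => n - n0) ?_ ?_
    · intro n hn
      have hn := Finset.mem_coe.1 hn
      rw [Finset.mem_erase] at hn
      have hle : n0 ≤ n := Finset.min'_le _ _ hn.2
      obtain ⟨x, hx, hxn⟩ := Finset.mem_image.1 hn.2
      obtain ⟨y, hy, hyn⟩ := Finset.mem_image.1 hn0A
      have hN := (hmem x hx).1
      have hlt : n0 < n := lt_of_le_of_ne hle (Ne.symm hn.1)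
      have := hclose y hy x hx (by omega)
      rw [hxn, hyn] at this
      exact Finset.mem_coe.2 ((mem_cset _ _ _ _).2 ⟨⟨by dsimp only; omega, by dsimp only; omega⟩, this⟩)
    · intro a ha b hb hab
      have ha := Finset.mem_coe.1 ha
      have hb := Finset.mem_coe.1 hb
      rw [Finset.mem_erase] at ha hb
      have h1 : n0 ≤ a := Finset.min'_le _ _ ha.2
      have h2 : n0 ≤ b := Finset.min'_le _ _ hb.2
      simp only at hab
      omega
  rw [Finset.card_erase_of_mem hn0A] at hcard
  omega

lemma lower1 (α : ℝ) (N : ℕ) (ε : ℝ) (hε : 0 < ε) (hε1 : ε ≤ 1) :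
    ⌊ε * N⌋₊ ≤ (cset α N ε).card := by
  set T := ⌊ε * N⌋₊ with hTd
  have hT : (T : ℝ) ≤ ε * N := Nat.floor_le (by positivity)
  have hN : (0:ℝ) < (N:ℝ) + 1 := by positivity
  have h1 : (T : ℝ) / (N + 1) < ε := by
    rw [div_lt_iff₀ hN]; nlinarith
  obtain ⟨r, hr1, hr2⟩ := exists_rat_btwn h1
  have hr0 : (0:ℝ) < r := lt_of_le_of_lt (by positivity) hr1
  have hr0' : 0 < r := by exact_mod_cast hr0
  have hnum : 0 < r.num := Rat.num_pos.2 hr0'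
  have hden : (0:ℝ) < r.den := by exact_mod_cast r.den_pos
  obtain ⟨p, hp⟩ := Int.eq_ofNat_of_zero_le hnum.le
  have hrd : (r : ℝ) = (p : ℝ) / r.den := by
    rw [Rat.cast_def, hp]; simp
  refine pigeon α N T r.den p ε r.den_pos ?_ ?_ (by rw [← hrd]; exact hr2.le)
  · have : (p : ℝ) / r.den ≤ 1 := by rw [← hrd]; linarith
    rw [div_le_one hden] at this
    exact_mod_cast this
  · rw [hrd, div_lt_div_iff₀ hN hden] at hr1
    have : (T : ℝ) * r.den < (N + 1) * p := by linarith
    exact_mod_cast this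

lemma lower2 (α : ℝ) (N Q Q' T : ℕ) (P : ℤ) (ε : ℝ) (hQ : 0 < Q) (hQ' : 0 < Q')
    (h : |(Q : ℝ) * α - P| < 1 / Q') (h1 : (T : ℝ) ≤ ε * Q') (h2 : (T : ℝ) ≤ N / (2 * Q)) :
    T ≤ (cset α N ε).card := by
  have hQR : (0:ℝ) < Q := by exact_mod_cast hQ
  have hQR' : (0:ℝ) < Q' := by exact_mod_cast hQ'
  have : (Finset.Icc 1 T).card ≤ (cset α N ε).card := by
    refine Finset.card_le_card_of_injOn (fun j => j * Q) ?_ ?_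
    · intro j hj
      have hj := Finset.mem_Icc.1 (Finset.mem_coe.1 hj)
      have hj1 : (1:ℝ) ≤ j := by exact_mod_cast hj.1
      have hjT : (j:ℝ) ≤ T := by exact_mod_cast hj.2
      refine Finset.mem_coe.2 ((mem_cset _ _ _ _).2 ⟨⟨Nat.mul_pos (by omega) hQ, ?_⟩, ?_⟩)
      · rw [le_div_iff₀ (by positivity)] at h2
        have : (j : ℝ) * Q ≤ N := by nlinarith
        exact_mod_cast this
      · refine lt_of_le_of_lt (nid_le _ (j * P)) ?_
        have e : ((j * Q : ℕ) : ℝ) * α - ((j * P : ℤ) : ℝ) = j * (Q * α - P) := by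
          push_cast; ring
        rw [e, abs_mul, abs_of_pos (by linarith : (0:ℝ) < j)]
        calc (j:ℝ) * |(Q:ℝ) * α - P| < j * (1 / Q') := by gcongr
          _ = j / Q' := by ring
          _ ≤ ε := by rw [div_le_iff₀ hQR']; linarith
    · intro a _ b _ hab
      exact Nat.eq_of_mul_eq_mul_right hQ hab
  simpa using this

lemma gap (α : ℝ) (Q : ℕ) (P : ℤ) (hQ : 0 < Q) (hc : IsCoprime P (Q : ℤ))
    (h : |(Q : ℝ) * α - P| ≤ 1 / Q) (m : ℕ) (hm : 0 < m) (hm2 : 2 * m < Q) (z : ℤ) :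
    1 ≤ 2 * Q * |(m : ℝ) * α - z| := by
  have hQR : (0:ℝ) < Q := by exact_mod_cast hQ
  have hmR : (0:ℝ) < m := by exact_mod_cast hm
  have hm2R : 2 * (m:ℝ) < Q := by exact_mod_cast hm2
  have hne : (m : ℤ) * P - z * Q ≠ 0 := by
    intro h0
    have hd : (Q : ℤ) ∣ m * P := ⟨z, by linarith⟩
    have := hc.symm.dvd_of_dvd_mul_right hd
    have := Nat.le_of_dvd hm (Int.natCast_dvd_natCast.1 this)
    omega
  have h1 : (1:ℝ) ≤ |(m : ℝ) * P - z * Q| := by exact_mod_cast Int.one_le_abs hne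
  have h2 : (m : ℝ) * P - z * Q = Q * (m * α - z) - m * (Q * α - P) := by ring
  have h3 := abs_sub (Q * ((m:ℝ) * α - z)) (m * (Q * α - P))
  rw [← h2, abs_mul, abs_mul, abs_of_pos hQR, abs_of_pos hmR] at h3
  have h4 : (m:ℝ) * |(Q:ℝ) * α - P| ≤ 1 / 2 := by
    calc (m:ℝ) * |(Q:ℝ) * α - P| ≤ m * (1 / Q) := by gcongr
      _ = m / Q := by ring
      _ ≤ 1 / 2 := by rw [div_le_div_iff₀ hQR (by norm_num)]; linarith
  nlinarith

lemma upper (α : ℝ) (N Q : ℕ) (P : ℤ) (ε : ℝ) (hε : 0 < ε) (hQ : 0 < Q)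
    (hc : IsCoprime P (Q : ℤ)) (h : |(Q : ℝ) * α - P| ≤ 1 / Q) :
    ((cset α N ε).card : ℝ) ≤ ((2 * N / Q : ℕ) + 1) * (4 * Q * ε + 1) := by
  have hQR : (0:ℝ) < Q := by exact_mod_cast hQ
  let x : ℕ → ℝ := fun n => n * α - round ((n : ℝ) * α)
  let φ : ℕ → ℕ × ℕ := fun n => (2 * n / Q, ⌊2 * Q * (x n + ε)⌋₊)
  have hcard : (cset α N ε).card ≤
      (Finset.range (2 * N / Q + 1) ×ˢ Finset.range (⌊4 * Q * ε⌋₊ + 1)).card := by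
    have hpos : ∀ n ∈ cset α N ε, -ε < x n ∧ x n < ε := by
      intro n hn
      exact abs_lt.1 ((mem_cset _ _ _ _).1 hn).2
    refine Finset.card_le_card_of_injOn φ ?_ ?_
    · intro n hn
      have hn := Finset.mem_coe.1 hn
      obtain ⟨h1, h2⟩ := hpos n hn
      have hnN := ((mem_cset _ _ _ _).1 hn).1.2
      simp only [φ, Finset.coe_product, Finset.coe_range, Set.mem_prod, Set.mem_Iio]
      refine ⟨Nat.lt_succ_of_le (Nat.div_le_div_right (by omega)),
        Nat.lt_succ_of_le (Nat.floor_le_floor ?_)⟩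
      nlinarith
    · have main : ∀ a ∈ cset α N ε, ∀ b ∈ cset α N ε, φ a = φ b → ¬ a < b := by
        intro a ha b hb hab hlt
        obtain ⟨ha1, ha2⟩ := hpos a ha
        obtain ⟨hb1, hb2⟩ := hpos b hb
        simp only [φ, Prod.mk.injEq] at hab
        obtain ⟨e1, e2⟩ := hab
        have hm2 : 2 * (b - a) < Q := by
          have r1 := Nat.div_add_mod (2 * a) Q
          have r2 := Nat.div_add_mod (2 * b) Q
          have r3 := Nat.mod_lt (2 * b) hQ
          rw [e1] at r1
          omega
        have hg := gap α Q P hQ hc h (b - a) (by omega) hm2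
          (round ((b:ℝ) * α) - round ((a:ℝ) * α))
        have e : ((b - a : ℕ) : ℝ) * α - ((round ((b:ℝ) * α) - round ((a:ℝ) * α) : ℤ) : ℝ)
            = x b - x a := by
          rw [Nat.cast_sub hlt.le]; push_cast; simp only [x]; ring
        rw [e] at hg
        have f1 := Nat.floor_le (a := 2 * Q * (x a + ε)) (by
          have : 0 ≤ x a + ε := by linarith
          positivity)
        have f2 := Nat.lt_floor_add_one (2 * Q * (x a + ε))
        have f3 := Nat.floor_le (a := 2 * Q * (x b + ε)) (by
          have : 0 ≤ x b + ε := by linarith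
          positivity)
        have f4 := Nat.lt_floor_add_one (2 * Q * (x b + ε))
        rw [e2] at f1 f2
        have : 2 * Q * |x b - x a| < 1 := by
          have : 2 * (Q:ℝ) * |x b - x a| = |2 * Q * (x b + ε) - 2 * Q * (x a + ε)| := by
            rw [← mul_sub, abs_mul, abs_of_pos (by positivity : (0:ℝ) < 2 * Q)]
            congr 2; ring
          rw [this, abs_lt]
          constructor <;> linarith
        linarith
      intro a ha b hb hab
      have h1 := main a ha b hb hab
      have h2 := main b hb a ha hab.symm
      omega
  rw [Finset.card_product, Finset.card_range, Finset.card_range] at hcard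
  calc ((cset α N ε).card : ℝ) ≤ (((2 * N / Q + 1) * (⌊4 * Q * ε⌋₊ + 1) : ℕ) : ℝ) := by
        exact_mod_cast hcard
    _ = ((2 * N / Q : ℕ) + 1) * ((⌊4 * Q * ε⌋₊ : ℝ) + 1) := by push_cast; ring
    _ ≤ _ := by
        gcongr
        exact Nat.floor_le (by positivity)

open GenContFract in
lemma cf_int (α : ℝ) (hnt : ∀ n, ¬ (GenContFract.of α).TerminatedAt n) (k : ℕ) :
    (∃ a b : ℤ, (GenContFract.of α).nums k = a ∧ (GenContFract.of α).dens k = b) ∧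
    (∃ a b : ℤ, (GenContFract.of α).nums (k+1) = a ∧ (GenContFract.of α).dens (k+1) = b) := by
  induction k with
  | zero =>
    refine ⟨⟨⌊α⌋, 1, by simp, by simp⟩, ?_⟩
    obtain ⟨gp, hgp⟩ := Option.ne_none_iff_exists'.1 (hnt 0)
    obtain ⟨h1, z, hz⟩ := of_partNum_eq_one_and_exists_int_partDen_eq hgp
    refine ⟨z * ⌊α⌋ + 1, z, ?_, ?_⟩
    · rw [first_num_eq hgp, h1, hz]; simp
    · rw [first_den_eq hgp, hz]
  | succ k ih =>
    refine ⟨ih.2, ?_⟩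
    obtain ⟨⟨a, b, ha, hb⟩, ⟨a', b', ha', hb'⟩⟩ := ih
    obtain ⟨gp, hgp⟩ := Option.ne_none_iff_exists'.1 (hnt (k + 1))
    obtain ⟨h1, z, hz⟩ := of_partNum_eq_one_and_exists_int_partDen_eq hgp
    refine ⟨z * a' + a, z * b' + b, ?_, ?_⟩
    · rw [nums_recurrence hgp ha ha', h1, hz]; push_cast; ring
    · rw [dens_recurrence hgp hb hb', h1, hz]; push_cast; ring

open GenContFract in
lemma cf_data (α : ℝ) (hα : Irrational α) (k : ℕ) : ∃ (P : ℤ) (Q Q' : ℕ),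
    (GenContFract.of α).dens k = Q ∧ (GenContFract.of α).dens (k + 1) = Q' ∧ 0 < Q ∧ Q ≤ Q' ∧
    IsCoprime P (Q : ℤ) ∧ |(Q : ℝ) * α - P| < 1 / Q' := by
  have hnt : ∀ n, ¬ (GenContFract.of α).TerminatedAt n := by
    intro n hn
    obtain ⟨r, hr⟩ := (terminates_iff_rat α).1 ⟨n, hn⟩
    exact hα ⟨r, hr.symm⟩
  obtain ⟨⟨a, b, ha, hb⟩, ⟨a', b', ha', hb'⟩⟩ := cf_int α hnt k
  have hpos : (1:ℝ) ≤ (GenContFract.of α).dens k := by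
    refine le_trans ?_ (succ_nth_fib_le_of_nth_den (v := α) (n := k) (Or.inr (hnt _)))
    exact_mod_cast Nat.fib_pos.2 (Nat.succ_pos k)
  have hmono := of_den_mono (v := α) (n := k)
  have hdet := (SimpContFract.of α).determinant (hnt k)
  have happ := abs_sub_convs_le (hnt k)
  change (GenContFract.of α).nums k * (GenContFract.of α).dens (k + 1) -
    (GenContFract.of α).dens k * (GenContFract.of α).nums (k + 1) = (-1) ^ (k + 1) at hdet
  rw [conv_eq_num_div_den] at happ
  rw [hb] at hpos hmono
  rw [hb'] at hmono
  rw [ha, hb, ha', hb'] at hdet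
  rw [ha, hb, hb'] at happ
  have hb1 : 1 ≤ b := by exact_mod_cast hpos
  have hbb : b ≤ b' := by exact_mod_cast hmono
  lift b to ℕ using by omega
  lift b' to ℕ using by omega
  have hbR : (0:ℝ) < (b:ℝ) := by exact_mod_cast (by omega : 0 < b)
  have hbR' : (0:ℝ) < (b':ℝ) := by exact_mod_cast (by omega : 0 < b')
  refine ⟨a, b, b', by simpa using hb, by simpa using hb', by omega, by omega, ?_, ?_⟩
  · have hdZ : a * b' - b * a' = (-1) ^ (k + 1) := by exact_mod_cast hdet
    have hsq : ((-1 : ℤ) ^ (k + 1)) * (-1) ^ (k + 1) = 1 := by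
      rw [← mul_pow]; simp
    refine ⟨(-1) ^ (k + 1) * b', -(-1) ^ (k + 1) * a', ?_⟩
    calc (-1) ^ (k + 1) * (b':ℤ) * a + -(-1) ^ (k + 1) * a' * b
        = (-1) ^ (k + 1) * (a * b' - b * a') := by ring
      _ = 1 := by rw [hdZ, hsq]
  · push_cast at happ
    have hle : |(b:ℝ) * α - a| ≤ 1 / b' := by
      have e : (b:ℝ) * α - a = b * (α - a / b) := by field_simp
      rw [e, abs_mul, abs_of_pos hbR]
      calc (b:ℝ) * |α - a / b| ≤ b * (1 / (b * b')) := by gcongr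
        _ = 1 / b' := by field_simp
    refine lt_of_le_of_ne hle ?_
    intro heq
    have hir : Irrational ((b:ℝ) * α - a) :=
      (hα.natCast_mul (by omega : b ≠ 0)).sub_intCast a
    rcases abs_choice ((b:ℝ) * α - a) with hs | hs
    · exact hir ⟨1 / b', by rw [← hs, heq]; push_cast; rfl⟩
    · exact hir ⟨-(1 / b'), by push_cast; rw [← heq, hs]; ring⟩

/-- Let α be irrational with continued fraction convergent denominators
`q_k`. If `1/N < 2ε < ‖q_2 α‖`, `q_K ≤ N < q_{K+1}` and
`M = max(εN, min(ε q_{K+1}, N/(2 q_K)))`, then `⌊M⌋ ≤ #{n ≤ N : ‖nα‖ < ε} ≤ 32 M`. -/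
theorem stmt_1 (α : ℝ) (hα : Irrational α) (N : ℕ) (hN : 1 ≤ N) (ε : ℝ) (hε : 0 < ε)
    (q : ℕ → ℝ) (hq : ∀ k, q k = (GenContFract.of α).dens k)
    (h1 : 1 / (N : ℝ) < 2 * ε) (h2 : 2 * ε < nid (q 2 * α))
    (K : ℕ) (hK : q K ≤ (N : ℝ)) (hK' : (N : ℝ) < q (K + 1))
    (M : ℝ) (hM : M = max (ε * N) (min (ε * q (K + 1)) ((N : ℝ) / (2 * q K)))) :
    (⌊M⌋ : ℤ) ≤ ({n : ℕ | 1 ≤ n ∧ n ≤ N ∧ nid (n * α) < ε}.ncard : ℤ) ∧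
      ({n : ℕ | 1 ≤ n ∧ n ≤ N ∧ nid (n * α) < ε}.ncard : ℝ) ≤ 32 * M := by
  rw [ncard_cset]
  have hNR : (0:ℝ) < N := by exact_mod_cast hN
  have hε1 : ε ≤ 1 := by
    have : nid (q 2 * α) ≤ 1 / 2 := abs_sub_round _
    linarith
  obtain ⟨P, Q, Q', hQ, hQ', hQ0, hQQ, hcop, happ⟩ := cf_data α hα K
  obtain ⟨P', R, R', hR, -, hR0, hRR, hcop', happ'⟩ := cf_data α hα (K + 1)
  have hRQ : R = Q' := by
    have : (R : ℝ) = Q' := by rw [← hR, ← hQ']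
    exact_mod_cast this
  subst hRQ
  rw [hq, hQ] at hK
  rw [hq, hR] at hK'
  rw [hq, hq, hQ, hR] at hM
  have hQR : (0:ℝ) < Q := by exact_mod_cast hQ0
  have hRR0 : (0:ℝ) < R := by exact_mod_cast hR0
  have hQRR : (Q:ℝ) ≤ R := by exact_mod_cast hQQ
  have hRRR : (R:ℝ) ≤ R' := by exact_mod_cast hRR
  constructor
  · have hM0 : 0 ≤ M := by rw [hM]; exact le_max_of_le_left (by positivity)
    rw [← Int.natCast_floor_eq_floor hM0]
    norm_cast
    rcases max_choice (ε * N) (min (ε * R) ((N : ℝ) / (2 * Q))) with hc | hc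
    · rw [hM, hc]; exact lower1 α N ε hε hε1
    · have hf := Nat.floor_le hM0
      have hMe : M = min (ε * R) ((N : ℝ) / (2 * Q)) := by rw [hM, hc]
      refine lower2 α N Q R _ P ε hQ0 hR0 happ (hf.trans ?_) (hf.trans ?_)
      · rw [hMe]; exact min_le_left _ _
      · rw [hMe]; exact min_le_right _ _
  · have hεN : 1 / 2 < ε * N := by
      rw [div_lt_iff₀ hNR] at h1; linarith
    have u1 := upper α N R P' ε hε hR0 hcop' (happ'.le.trans (by gcongr))
    have u2 := upper α N Q P ε hε hQ0 hcop (happ.le.trans (by gcongr))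
    have hd : 2 * N / R ≤ 1 := by
      have : N < R := by exact_mod_cast hK'
      have : 2 * N / R < 2 := (Nat.div_lt_iff_lt_mul hR0).2 (by omega)
      omega
    have hdR : ((2 * N / R : ℕ) : ℝ) ≤ 1 := by exact_mod_cast hd
    have hεR : ε * N < ε * R := by gcongr
    have v1 : ((cset α N ε).card : ℝ) ≤ 12 * (ε * R) := by
      have : ((2 * N / R : ℕ) + 1) * (4 * R * ε + 1) ≤ (1 + 1) * (4 * R * ε + 1) := by gcongr
      linarith
    have v2 : ((cset α N ε).card : ℝ) ≤ 12 * (ε * N) + 6 * (N / (2 * Q)) := by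
      have d1 : ((2 * N / Q : ℕ) : ℝ) ≤ 2 * N / Q := by
        have := Nat.cast_div_le (α := ℝ) (m := 2 * N) (n := Q)
        push_cast at this
        exact this
      have d2 : (1:ℝ) ≤ N / Q := by rw [le_div_iff₀ hQR]; linarith
      calc ((cset α N ε).card : ℝ) ≤ ((2 * N / Q : ℕ) + 1) * (4 * Q * ε + 1) := u2
        _ ≤ (2 * N / Q + N / Q) * (4 * Q * ε + 1) := by gcongr
        _ = 12 * (ε * N) + 6 * (N / (2 * Q)) := by field_simp; ring
    have m1 : ε * N ≤ M := by rw [hM]; exact le_max_left _ _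
    have m2 : min (ε * R) ((N : ℝ) / (2 * Q)) ≤ M := by rw [hM]; exact le_max_right _ _
    rcases min_choice (ε * R) ((N : ℝ) / (2 * Q)) with hc | hc
    · rw [hc] at m2; linarith
    · rw [hc] at m2; linarith
end

section
/- Let α ∈ Bad (badly approximable), i.e. inf_{n≥1} n‖nα‖ > 0, and let b ≥ 300. Then there exist absolute constants c₂ > c₁ > 0 and a constant K = K(α,b) > 0 such that for all N ∈ ℕ, all γ ∈ ℝ, and all ε ≥ K/N with ε ≤ 1/2: c₁ N ε ≤ #{n ≤ N : ε/b ≤ ‖nα − γ‖ < ε} ≤ c₂ N ε. -/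
lemma nid_eq (x v : ℝ) (z : ℤ) (h : x = v + z) (h0 : 0 ≤ v) (h1 : v < 1 / 2) : nid x = v := by
  have : round v = 0 := by
    rw [round_eq_zero_iff]; constructor <;> linarith
  unfold nid
  rw [h, round_add_intCast, this]
  push_cast
  rw [show v + (z:ℝ) - (0 + z) = v by ring, abs_of_nonneg h0]

lemma err_bound (α : ℝ) (p : ℤ) (q : ℕ) (hq : 0 < q) (herr : |α - p / q| * q ≤ 1 / q)
    (j : ℝ) (hj0 : 0 ≤ j) (hj : j ≤ q) : |q * (j * (α - p / q))| ≤ 1 := by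
  have hq' : (0:ℝ) < q := by exact_mod_cast hq
  rw [le_div_iff₀ hq'] at herr
  rw [abs_mul, abs_mul, abs_of_pos hq', abs_of_nonneg hj0]
  calc (q:ℝ) * (j * |α - p / q|) ≤ q * (q * |α - p / q|) := by gcongr
    _ ≤ 1 := by linarith

lemma block_upper (α γ ε : ℝ) (p : ℤ) (q : ℕ) (hq : 0 < q) (hc : IsCoprime p (q : ℤ))
    (herr : |α - p / q| * q ≤ 1 / q) (hε : 12 ≤ q * ε) (m : ℕ) (P : ℕ → Prop) [DecidablePred P]
    (hP : ∀ n, P n → nid (n * α - γ) < ε) :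
    (((Finset.Ico m (m + q)).filter P).card : ℝ) ≤ 3 * (q * ε) := by
  have hq' : (0:ℝ) < q := by exact_mod_cast hq
  set t : ℝ := m * α - γ with ht
  set A : ℝ := q * (-ε - t) - 1 with hA
  set B : ℝ := q * (ε - t) + 1 with hB
  have hcard : ((Finset.Ico m (m + q)).filter P).card ≤ (Finset.Icc ⌈A⌉ ⌊B⌋).card := by
    apply Finset.card_le_card_of_injOn (fun n : ℕ => ((n : ℤ) - m) * p - round (n * α - γ) * q)
    · intro n hn
      simp only [Finset.coe_filter, Finset.mem_Ico, Set.mem_setOf_eq] at hn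
      obtain ⟨⟨h1, h2⟩, h3⟩ := hn
      have h3 := hP n h3
      unfold nid at h3
      have h1' : (m:ℝ) ≤ n := by exact_mod_cast h1
      have h2' : (n:ℝ) < m + q := by exact_mod_cast h2
      have he := err_bound α p q hq herr (n - m) (by linarith) (by linarith)
      rw [abs_lt] at h3
      rw [abs_le] at he
      have key : (q:ℝ) * (n * α - γ - round (n * α - γ)) = q * t +
          ((n - m) * p - round (n * α - γ) * q) + q * ((n - m) * (α - p / q)) := by
        rw [ht]; field_simp; ring
      have a1 := mul_lt_mul_of_pos_left h3.1 hq'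
      have a2 := mul_lt_mul_of_pos_left h3.2 hq'
      simp only [Finset.coe_Icc, Set.mem_Icc]
      rw [Int.ceil_le, Int.le_floor]
      push_cast
      constructor <;> nlinarith
    · intro n hn n' hn' h
      simp only [Finset.coe_filter, Finset.mem_Ico, Set.mem_setOf_eq] at hn hn'
      simp only at h
      have hd : (q : ℤ) ∣ ((n : ℤ) - n') * p :=
        ⟨round (n * α - γ) - round (n' * α - γ), by linarith⟩
      have hd := hc.symm.dvd_of_dvd_mul_right hd
      have := Int.eq_zero_of_abs_lt_dvd hd (by rw [abs_lt]; constructor <;> omega)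
      omega
  have h2 : ((Finset.Icc ⌈A⌉ ⌊B⌋).card : ℝ) ≤ B - A + 1 := by
    rw [Int.card_Icc]
    have hBA : 0 ≤ B - A := by rw [hA, hB]; nlinarith
    have : (((⌊B⌋ + 1 - ⌈A⌉).toNat : ℤ) : ℝ) ≤ B - A + 1 := by
      rw [Int.toNat_eq_max]
      push_cast
      apply max_le
      · have := Int.floor_le B
        have := Int.le_ceil A
        linarith
      · linarith
    exact_mod_cast this
  have h3 : (((Finset.Ico m (m + q)).filter P).card : ℝ) ≤ (Finset.Icc ⌈A⌉ ⌊B⌋).card := by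
    exact_mod_cast hcard
  have : B - A + 1 = 2 * (q * ε) + 3 := by rw [hA, hB]; ring
  linarith

lemma block_lower (α γ ε δ : ℝ) (p : ℤ) (q : ℕ) (hq : 0 < q) (hc : IsCoprime p (q : ℤ))
    (herr : |α - p / q| * q ≤ 1 / q) (hε : 12 ≤ q * ε) (hε2 : ε ≤ 1 / 2)
    (hδ : 0 ≤ δ) (hδε : δ ≤ ε / 2) (m : ℕ) (P : ℕ → Prop) [DecidablePred P]
    (hP : ∀ n, m ≤ n → δ ≤ nid (n * α - γ) → nid (n * α - γ) < ε → P n) :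
    q * ε / 4 ≤ (((Finset.Ico m (m + q)).filter P).card : ℝ) := by
  have hq' : (0:ℝ) < q := by exact_mod_cast hq
  have hqz : (0:ℤ) < q := by exact_mod_cast hq
  set t : ℝ := m * α - γ with ht
  set A : ℝ := q * (δ - t) + 1 with hA
  set B : ℝ := q * (ε - t) - 1 with hB
  obtain ⟨u, w, huw⟩ := hc
  have hcard : (Finset.Ico ⌈A⌉ ⌈B⌉).card ≤ ((Finset.Ico m (m + q)).filter P).card := by
    apply Finset.card_le_card_of_injOn (fun k : ℤ => m + ((k * u) % q).toNat)
    · intro k hk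
      simp only [Finset.coe_Ico, Set.mem_Ico] at hk
      rw [Int.ceil_le, Int.lt_ceil] at hk
      have e1 := Int.emod_nonneg (k * u) hqz.ne'
      have e2 := Int.emod_lt_of_pos (k * u) hqz
      have e3 := Int.emod_add_mul_ediv (k * u) q
      set r := (k * u) % q with hr
      set d := (k * u) / q with hd
      have hrn : ((r.toNat : ℤ)) = r := Int.toNat_of_nonneg e1
      have hrR : ((r.toNat : ℝ)) = (r : ℝ) := by exact_mod_cast hrn
      simp only [Finset.coe_filter, Finset.mem_Ico, Set.mem_setOf_eq]
      refine ⟨⟨by omega, by omega⟩, ?_⟩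
      have e1' : (0:ℝ) ≤ r := by exact_mod_cast e1
      have e2' : (r:ℝ) < q := by exact_mod_cast e2
      have he := err_bound α p q hq herr r e1' e2'.le
      rw [abs_le] at he
      -- r * p = k - q * (k w + d p)
      have hz : r * p = k - q * (k * w + d * p) := by linear_combination p * e3 + k * huw
      have hzR : (r:ℝ) * p = k - q * (k * w + d * p) := by exact_mod_cast hz
      set v : ℝ := t + k / q + r * (α - p / q) with hv
      have hqv : q * v = q * t + k + q * (r * (α - p / q)) := by
        rw [hv]; field_simp
      have v1 : δ ≤ v := by
        apply le_of_mul_le_mul_left _ hq'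
        linarith
      have v2 : v < ε := by
        apply lt_of_mul_lt_mul_left _ hq'.le
        linarith
      have hn : nid (((m + r.toNat : ℕ) : ℝ) * α - γ) = v := by
        apply nid_eq _ v (-(k * w + d * p)) _ (by linarith) (by linarith)
        push_cast
        rw [hrR, hv, ht]
        field_simp
        linear_combination hzR
      apply hP _ (by omega) <;> rw [hn] <;> assumption
    · intro k hk k' hk' h
      simp only [Finset.coe_Ico, Set.mem_Ico] at hk hk'
      rw [Int.ceil_le, Int.lt_ceil] at hk hk'
      simp only [add_right_inj] at h
      have e1 := Int.emod_nonneg (k * u) hqz.ne'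
      have e2 := Int.emod_nonneg (k' * u) hqz.ne'
      have h' : (k * u) % q = (k' * u) % q := by omega
      have hd : (q:ℤ) ∣ (k - k') * u := by
        have := Int.dvd_of_emod_eq_zero (Int.emod_eq_emod_iff_emod_sub_eq_zero.mp h')
        rwa [← sub_mul] at this
      have hcu : IsCoprime (q:ℤ) u := ⟨w, p, by linarith⟩
      have hd := hcu.dvd_of_dvd_mul_right hd
      have hlt : |(k:ℝ) - k'| < q := by
        have : B - A ≤ q := by rw [hA, hB]; nlinarith
        rw [abs_lt]; constructor <;> linarith
      have := Int.eq_zero_of_abs_lt_dvd hd (by exact_mod_cast hlt)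
      omega
  have h2 : B - A - 1 ≤ ((Finset.Ico ⌈A⌉ ⌈B⌉).card : ℝ) := by
    rw [Int.card_Ico]
    have : B - A - 1 ≤ (((⌈B⌉ - ⌈A⌉).toNat : ℤ) : ℝ) := by
      rw [Int.toNat_eq_max]
      push_cast
      apply le_max_of_le_left
      have := Int.le_ceil B
      have := Int.ceil_lt_add_one A
      linarith
    exact_mod_cast this
  have h3 : ((Finset.Ico ⌈A⌉ ⌈B⌉).card : ℝ) ≤ (((Finset.Ico m (m + q)).filter P).card : ℝ) := by
    exact_mod_cast hcard
  have : B - A - 1 = q * ε - q * δ - 3 := by rw [hA, hB]; ring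
  nlinarith

lemma blocks (P : ℕ → Prop) [DecidablePred P] (q : ℕ) (L U : ℝ)
    (h : ∀ m, 1 ≤ m → L ≤ (((Finset.Ico m (m + q)).filter P).card : ℝ) ∧
      (((Finset.Ico m (m + q)).filter P).card : ℝ) ≤ U) (s : ℕ) :
    s * L ≤ (((Finset.Ico 1 (1 + s * q)).filter P).card : ℝ) ∧
      (((Finset.Ico 1 (1 + s * q)).filter P).card : ℝ) ≤ s * U := by
  induction s with
  | zero => simp
  | succ s ih =>
    have h1 := h (1 + s * q) (by omega)
    have : ((Finset.Ico 1 (1 + (s + 1) * q)).filter P).card =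
        ((Finset.Ico 1 (1 + s * q)).filter P).card +
        ((Finset.Ico (1 + s * q) (1 + s * q + q)).filter P).card := by
      rw [← Finset.card_union_of_disjoint, ← Finset.filter_union,
        Finset.Ico_union_Ico_eq_Ico (by omega) (by omega)]
      · congr 3; ring
      · apply Finset.disjoint_filter_filter
        exact Finset.Ico_disjoint_Ico_consecutive _ _ _
    rw [this]
    push_cast
    constructor <;> linarith

/-- There exist absolute constants `c₂ > c₁ > 0` such that for every
badly approximable `α` and every `b ≥ 300` there is `K = K(α,b) > 0` with: for all
`N ≥ 1`, all `γ ∈ ℝ` and all `ε` with `K/N ≤ ε ≤ 1/2`,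
`c₁ N ε ≤ #{n ≤ N : ε/b ≤ ‖nα − γ‖ < ε} ≤ c₂ N ε`. -/
theorem stmt_13 :
    ∃ c₁ c₂ : ℝ, 0 < c₁ ∧ c₁ < c₂ ∧
      ∀ α : ℝ, (∃ c₀ : ℝ, 0 < c₀ ∧ ∀ n : ℕ, 1 ≤ n → c₀ ≤ (n : ℝ) * nid (n * α)) →
        ∀ b : ℝ, 300 ≤ b →
          ∃ K : ℝ, 0 < K ∧ ∀ N : ℕ, 1 ≤ N → ∀ γ : ℝ, ∀ ε : ℝ,
            K / (N : ℝ) ≤ ε → ε ≤ 1 / 2 →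
            c₁ * N * ε ≤
                ({n : ℕ | 1 ≤ n ∧ n ≤ N ∧ ε / b ≤ nid (n * α - γ) ∧
                  nid (n * α - γ) < ε}.ncard : ℝ) ∧
              ({n : ℕ | 1 ≤ n ∧ n ≤ N ∧ ε / b ≤ nid (n * α - γ) ∧
                  nid (n * α - γ) < ε}.ncard : ℝ) ≤ c₂ * N * ε := by
  classical
  refine ⟨1 / 8, 6, by norm_num, by norm_num, ?_⟩
  rintro α ⟨c₀, hc₀, hα⟩ b hb
  refine ⟨12 / c₀, by positivity, ?_⟩
  intro N hN γ ε hε1 hε2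
  have hN' : (0:ℝ) < N := by exact_mod_cast hN
  have hNε : 12 / c₀ ≤ ε * N := (div_le_iff₀ hN').mp hε1
  have hNε' : 12 ≤ ε * N * c₀ := (div_le_iff₀ hc₀).mp hNε
  have hε0 : 0 < ε := lt_of_lt_of_le (by positivity) hε1
  obtain ⟨r, hr1, hr2⟩ := Real.exists_rat_abs_sub_le_and_den_le α hN
  set q := r.den with hqdef
  set p := r.num with hpdef
  have hq : 0 < q := r.pos
  have hq' : (0:ℝ) < q := by exact_mod_cast hq
  have hqN : (q:ℝ) ≤ N := by exact_mod_cast hr2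
  have hrpq : (r:ℝ) = p / q := Rat.cast_def r
  rw [hrpq] at hr1
  have hc : IsCoprime p (q:ℤ) := Rat.isCoprime_num_den r
  have hsm : |α - p / q| * q ≤ 1 / (N + 1) := by
    calc |α - p / q| * q ≤ 1 / ((N + 1) * q) * q := by gcongr
      _ = 1 / (N + 1) := by field_simp
  have herr : |α - p / q| * q ≤ 1 / q := by
    refine hsm.trans ?_
    gcongr
    linarith
  have hqc : c₀ * N ≤ q := by
    have h1 := hα q hq
    have h2 := nid_le (q * α) p
    have h3 : |q * α - p| = |α - p / q| * q := by
      rw [← abs_of_pos hq', ← abs_mul, abs_of_pos hq']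
      congr 1; field_simp
    rw [h3] at h2
    have h4 : c₀ ≤ q * (1 / (N + 1)) :=
      h1.trans (mul_le_mul_of_nonneg_left (h2.trans hsm) hq'.le)
    rw [mul_one_div, le_div_iff₀ (by positivity)] at h4
    linarith
  have hqε : 12 ≤ q * ε := by nlinarith
  have hδ0 : 0 ≤ ε / b := by positivity
  have hδ : ε / b ≤ ε / 2 := by gcongr; linarith
  set P : ℕ → Prop := fun n => ε / b ≤ nid (n * α - γ) ∧ nid (n * α - γ) < ε with hP
  have hb := blocks P q (q * ε / 4) (3 * (q * ε)) (fun m _ =>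
    ⟨block_lower α γ ε (ε / b) p q hq hc herr hqε hε2 hδ0 hδ m P (fun n _ h1 h2 => ⟨h1, h2⟩),
     block_upper α γ ε p q hq hc herr hqε m P (fun n h => h.2)⟩)
  have hset : {n : ℕ | 1 ≤ n ∧ n ≤ N ∧ ε / b ≤ nid (n * α - γ) ∧
      nid (n * α - γ) < ε} = (((Finset.Ico 1 (1 + N)).filter P : Finset ℕ) : Set ℕ) := by
    ext n
    simp only [Set.mem_setOf_eq, Finset.coe_filter, Finset.mem_Ico, hP]
    constructor
    · rintro ⟨h1, h2, h3⟩; exact ⟨⟨h1, by omega⟩, h3⟩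
    · rintro ⟨⟨h1, h2⟩, h3⟩; exact ⟨h1, by omega, h3⟩
  rw [hset, Set.ncard_coe_finset]
  have d1 : N / q * q ≤ N := Nat.div_mul_le_self N q
  have d2 : N < (N / q + 1) * q := by
    rw [mul_comm]; exact Nat.lt_mul_div_succ N hq
  have d3 : 1 ≤ N / q := (Nat.one_le_div_iff hq).mpr hr2
  set s := N / q with hs
  have d1' : (s:ℝ) * q ≤ N := by exact_mod_cast d1
  have d2' : (N:ℝ) < (s + 1) * q := by exact_mod_cast d2
  have d3' : (1:ℝ) ≤ s := by exact_mod_cast d3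
  have c1 : ((((Finset.Ico 1 (1 + s * q)).filter P).card : ℕ) : ℝ) ≤
      (((Finset.Ico 1 (1 + N)).filter P).card : ℝ) := by
    exact_mod_cast Finset.card_le_card (Finset.filter_subset_filter _
      (Finset.Ico_subset_Ico_right (by omega)))
  have c2 : ((((Finset.Ico 1 (1 + N)).filter P).card : ℕ) : ℝ) ≤
      (((Finset.Ico 1 (1 + (s + 1) * q)).filter P).card : ℝ) := by
    exact_mod_cast Finset.card_le_card (Finset.filter_subset_filter _
      (Finset.Ico_subset_Ico_right (by omega)))
  have b1 := (hb s).1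
  have b2 := (hb (s + 1)).2
  push_cast at b2
  have f1 : (N:ℝ) ≤ 2 * (s * q) := by nlinarith
  have f2 : ((s:ℝ) + 1) * q ≤ 2 * N := by nlinarith
  constructor
  · have := mul_le_mul_of_nonneg_right f1 hε0.le
    linarith
  · have := mul_le_mul_of_nonneg_right f2 hε0.le
    linarith
end
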